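/- For all positive integers r and m, there exist infinitely many primes p such that pm is a Schemmel nontotient number of order r (i.e., pm is not in the range of S_r). -/

import Mathlib

/-- The `r`-th Schemmel totient function: multiplicative, with
`S_r(p^a) = 0` if `p ≤ r` and `S_r(p^a) = p^(a-1) * (p - r)` if `p > r`. -/
def schemmel (r n : ℕ) : ℕ :=
  n.factorization.prod (fun p a => if p ≤ r then 0 else p ^ (a - 1) * (p - r))

theorem infinite_primes_nontotient_mul (r m : ℕ) (hr : 0 < r) (hm : 0 < m) :
    {p : ℕ | p.Prime ∧ ¬ ∃ x : ℕ, 0 < x ∧ schemmel r x = p * m}.Infinite := by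
  obtain ⟨p₀, hp₀r, hp₀⟩ := Nat.exists_infinite_primes (r + 1)
  set N : ℕ := ∏ d ∈ Finset.Icc 1 m, (p₀ * d + r) with hN
  have hN0 : N ≠ 0 := by
    rw [hN, Finset.prod_ne_zero_iff]
    intro d _
    omega
  have hcop : p₀.Coprime N := by
    rw [hN]
    apply Nat.Coprime.prod_right
    intro d _
    rw [hp₀.coprime_iff_not_dvd]
    intro h
    have h1 : p₀ ∣ r := (Nat.dvd_add_right (Dvd.intro d rfl)).1 h
    have := Nat.le_of_dvd hr h1
    omega
  apply Set.infinite_of_forall_exists_gt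
  intro n
  obtain ⟨p, hpn, hp, hmod⟩ :=
    Nat.forall_exists_prime_gt_and_modEq (n + p₀ + m + r) hN0 hcop
  refine ⟨p, ⟨hp, ?_⟩, by omega⟩
  rintro ⟨x, hx, hS⟩
  unfold schemmel Finsupp.prod at hS
  have hpd := hS ▸ Dvd.intro m rfl
  obtain ⟨q, hq, hpq⟩ := (hp.prime.dvd_finset_prod_iff _).1 hpd
  have hfq := hS ▸ Finset.dvd_prod_of_mem
    (fun q => if q ≤ r then 0 else q ^ (x.factorization q - 1) * (q - r)) hq
  have hqp : q.Prime := Nat.prime_of_mem_primeFactors (by simpa using hq)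
  have hpm : p * m ≠ 0 := mul_ne_zero hp.ne_zero hm.ne'
  by_cases hqr : q ≤ r
  · simp only [hqr, if_true, zero_dvd_iff] at hfq
    exact hpm hfq
  simp only [hqr, if_false] at hpq hfq
  have hdiv : q - r ∣ p * m := (Dvd.intro_left _ rfl).trans hfq
  rcases hp.dvd_mul.1 hpq with h | h
  · have hpq' : p = q := (Nat.prime_dvd_prime_iff_eq hp hqp).1 (hp.dvd_of_dvd_pow h)
    subst hpq'
    have hc : (p - r).Coprime p := by
      rw [Nat.coprime_comm, hp.coprime_iff_not_dvd]
      intro h'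
      have := Nat.le_of_dvd (by omega) h'
      omega
    have := Nat.le_of_dvd hm (hc.dvd_of_dvd_mul_left hdiv)
    omega
  · obtain ⟨d, hd⟩ := h
    rw [hd] at hdiv
    have hdm : d ∣ m := Nat.dvd_of_mul_dvd_mul_left hp.pos hdiv
    have hd0 : 0 < d := Nat.pos_of_dvd_of_pos hdm hm
    have hdle := Nat.le_of_dvd hm hdm
    have hqe : q = p * d + r := by omega
    have hdN : p₀ * d + r ∣ N :=
      Finset.dvd_prod_of_mem (fun d => p₀ * d + r) (Finset.mem_Icc.2 ⟨hd0, hdle⟩)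
    have hm2 : p * d + r ≡ p₀ * d + r [MOD p₀ * d + r] :=
      ((hmod.of_dvd hdN).mul_right d).add_right r
    have hdq : p₀ * d + r ∣ q := by
      rw [hqe]
      exact (hm2.dvd_iff dvd_rfl).2 dvd_rfl
    have h1 : 0 < p₀ * d := Nat.mul_pos hp₀.pos hd0
    have h2 : p₀ * d < p * d := Nat.mul_lt_mul_of_pos_right (by omega) hd0
    rcases (Nat.dvd_prime hqp).1 hdq with h | h <;> omega
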